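/- Let s ≥ 1, r ∈ ℕ, let U ⊆ ℝ^m be open, and let β_1, …, β_s : U → ℝ be smooth functions such that for every u ∈ U and every α ∈ ℤ^s with 0 < |α| < r one has Σ_{j=1}^s α_j β_j(u) ≠ 0 (where |α| = Σ_j |α_j|). For multi-indices α, α' ∈ ℕ^s let m_{α,α'}(x,ξ) = ∏_j (x_j + iξ_j)^{α_j} ∏_j (x_j − iξ_j)^{α'_j}, let |z_j|²(x,ξ) = x_j² + ξ_j², and let the Poisson bracket in the (x,ξ) variables be {f,g} = Σ_j (∂_{ξ_j} f ∂_{x_j} g − ∂_{x_j} f ∂_{ξ_j} g). Let R : U × ℝ^{2s} → ℂ be a finite sum R(u,x,ξ) = Σ c_{α,α'}(u) m_{α,α'}(x,ξ) with smooth coefficients c_{α,α'} : U → ℂ, where every appearing pair satisfies |α| + |α'| < r. Then there exist functions K and ρ of the same form (finite sums of monomials m_{α,α'} of degree |α| + |α'| < r with smooth coefficients on U) such that R(u,x,ξ) = K(u,x,ξ) + Σ_{j=1}^s β_j(u) {|z_j|², ρ(u,·,·)}(x,ξ) for all (u,x,ξ), and {K(u,·,·), |z_j|²} = 0 for every u ∈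 U and every j. -/

import Mathlib

noncomputable section

/-- The Poisson bracket `{f,g} = Σ_j (∂_{ξ_j} f ∂_{x_j} g − ∂_{x_j} f ∂_{ξ_j} g)`
of complex-valued functions on `ℝ^s_x × ℝ^s_ξ`. -/
def poissonBracket {s : ℕ} (f g : ((Fin s → ℝ) × (Fin s → ℝ)) → ℂ)
    (p : (Fin s → ℝ) × (Fin s → ℝ)) : ℂ :=
  ∑ j : Fin s,
    (fderiv ℝ f p (0, Pi.single j 1) * fderiv ℝ g p (Pi.single j 1, 0)
      - fderiv ℝ f p (Pi.single j 1, 0) * fderiv ℝ g p (0, Pi.single j 1))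

/-- The monomial `m_{α,α'}(x,ξ) = ∏_j (x_j + iξ_j)^{α_j} ∏_j (x_j − iξ_j)^{α'_j}`. -/
def mono {s : ℕ} (α α' : Fin s → ℕ) (p : (Fin s → ℝ) × (Fin s → ℝ)) : ℂ :=
  (∏ j, ((p.1 j : ℂ) + Complex.I * (p.2 j : ℂ)) ^ (α j)) *
    (∏ j, ((p.1 j : ℂ) - Complex.I * (p.2 j : ℂ)) ^ (α' j))

/-- The classical harmonic oscillator `|z_j|²(x,ξ) = x_j² + ξ_j²`, seen as a
complex-valued function. -/
def osc {s : ℕ} (j : Fin s) (p : (Fin s → ℝ) × (Fin s → ℝ)) : ℂ :=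
  ((p.1 j) ^ 2 + (p.2 j) ^ 2 : ℝ)

/-!
With `z_j = x_j + iξ_j`, the oscillator factors as `|z_j|² = z_j z̄_j`, and the brackets of the
linear forms `z_k`, `z̄_k` are constants. The Leibniz rule therefore makes every monomial `m_{α,α'}`
a joint eigenfunction of the operators `{|z_j|², ·}`, with eigenvalues `2i(α'_j − α_j)`. The
operator `Σ_j β_j {|z_j|², ·}` is thus diagonal in the monomials. Those with `α = α'` commute with
every `|z_j|²` and form `K`; on the others non-resonance keeps the eigenvalue away from zero in
degree `< r`, and dividing by it preserves smoothness of the coefficients.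
-/

/-- The phase space `ℝ^s_x × ℝ^s_ξ`. -/
abbrev PhaseSpace (s : ℕ) : Type := (Fin s → ℝ) × (Fin s → ℝ)

section PoissonBracket

variable {s : ℕ} {f g h : PhaseSpace s → ℂ} {p : PhaseSpace s}

lemma poissonBracket_swap (f g : PhaseSpace s → ℂ) (p : PhaseSpace s) :
    poissonBracket f g p = -poissonBracket g f p := by
  simp only [poissonBracket, ← Finset.sum_neg_distrib]
  exact Finset.sum_congr rfl fun j _ => by ring

lemma poissonBracket_const_right (h : PhaseSpace s → ℂ) (c : ℂ) (p : PhaseSpace s) :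
    poissonBracket h (fun _ => c) p = 0 := by
  simp [poissonBracket]

lemma poissonBracket_mul_right (hf : DifferentiableAt ℝ f p) (hg : DifferentiableAt ℝ g p) :
    poissonBracket h (fun q => f q * g q) p
      = f p * poissonBracket h g p + g p * poissonBracket h f p := by
  simp only [poissonBracket, fderiv_fun_mul hf hg, add_apply, smul_apply, smul_eq_mul,
    Finset.mul_sum, ← Finset.sum_add_distrib]
  exact Finset.sum_congr rfl fun j _ => by ring

lemma poissonBracket_mul_left (hf : DifferentiableAt ℝ f p) (hg : DifferentiableAt ℝ g p) :
    poissonBracket (fun q => f q * g q) h p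
      = f p * poissonBracket g h p + g p * poissonBracket f h p := by
  rw [poissonBracket_swap, poissonBracket_mul_right hf hg, poissonBracket_swap h g,
    poissonBracket_swap h f]
  ring

lemma poissonBracket_sum_right {ι : Type*} {T : Finset ι} {F : ι → PhaseSpace s → ℂ}
    (hF : ∀ a ∈ T, DifferentiableAt ℝ (F a) p) :
    poissonBracket h (fun q => ∑ a ∈ T, F a q) p = ∑ a ∈ T, poissonBracket h (F a) p := by
  simp only [poissonBracket, fderiv_fun_sum hF, sum_apply, Finset.mul_sum,
    ← Finset.sum_sub_distrib]
  exact Finset.sum_comm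

/-- `f` is a differentiable eigenfunction, possibly zero, of the operator `{h, ·}` with
eigenvalue `μ`. -/
structure IsPoissonEigenfunction (h f : PhaseSpace s → ℂ) (μ : ℂ) : Prop where
  differentiable : Differentiable ℝ f
  poissonBracket_eq : ∀ p, poissonBracket h f p = μ * f p

namespace IsPoissonEigenfunction

variable {μ ν : ℂ}

lemma const (h : PhaseSpace s → ℂ) (c : ℂ) : IsPoissonEigenfunction h (fun _ => c) 0 where
  differentiable := differentiable_const c
  poissonBracket_eq p := by rw [poissonBracket_const_right, zero_mul]

lemma mul (hf : IsPoissonEigenfunction h f μ) (hg : IsPoissonEigenfunction h g ν) :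
    IsPoissonEigenfunction h (fun p => f p * g p) (μ + ν) where
  differentiable := hf.differentiable.fun_mul hg.differentiable
  poissonBracket_eq p := by
    rw [poissonBracket_mul_right (hf.differentiable p) (hg.differentiable p),
      hf.poissonBracket_eq, hg.poissonBracket_eq]
    ring

lemma const_mul (hf : IsPoissonEigenfunction h f μ) (c : ℂ) :
    IsPoissonEigenfunction h (fun p => c * f p) μ := by
  simpa using (const h c).mul hf

lemma pow (hf : IsPoissonEigenfunction h f μ) (n : ℕ) :
    IsPoissonEigenfunction h (fun p => f p ^ n) (n * μ) := by
  induction n with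
  | zero => simpa using const h 1
  | succ n ih => simpa [pow_succ, add_mul] using ih.mul hf

lemma prod {ι : Type*} {T : Finset ι} {F : ι → PhaseSpace s → ℂ} {μ : ι → ℂ}
    (hF : ∀ a ∈ T, IsPoissonEigenfunction h (F a) (μ a)) :
    IsPoissonEigenfunction h (fun p => ∏ a ∈ T, F a p) (∑ a ∈ T, μ a) := by
  classical
  induction T using Finset.induction_on with
  | empty => simpa using const h 1
  | insert a T ha ih =>
    simpa [Finset.prod_insert ha, Finset.sum_insert ha] using
      (hF a (Finset.mem_insert_self a T)).mul
        (ih fun b hb => hF b (Finset.mem_insert_of_mem hb))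

lemma poissonBracket_sum {ι : Type*} {T : Finset ι} {F : ι → PhaseSpace s → ℂ} {μ : ι → ℂ}
    (hF : ∀ a ∈ T, IsPoissonEigenfunction h (F a) (μ a)) (p : PhaseSpace s) :
    poissonBracket h (fun q => ∑ a ∈ T, F a q) p = ∑ a ∈ T, μ a * F a p := by
  rw [poissonBracket_sum_right fun a ha => (hF a ha).differentiable p]
  exact Finset.sum_congr rfl fun a ha => (hF a ha).poissonBracket_eq p

end IsPoissonEigenfunction

end PoissonBracket

section Oscillator

variable {s : ℕ}

/-- The linear form `x_k + c ξ_k` on phase space: `z_k` for `c = i` and `z̄_k` for `c = -i`. -/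
def linearCoord (c : ℂ) (k : Fin s) : PhaseSpace s →L[ℝ] ℂ :=
  Complex.ofRealCLM ∘L .proj k ∘L .fst ℝ _ _ + c • (Complex.ofRealCLM ∘L .proj k ∘L .snd ℝ _ _)

@[simp]
lemma linearCoord_apply (c : ℂ) (k : Fin s) (p : PhaseSpace s) :
    linearCoord c k p = p.1 k + c * p.2 k := rfl

lemma poissonBracket_linearCoord (c d : ℂ) (j k : Fin s) (p : PhaseSpace s) :
    poissonBracket (linearCoord c j) (linearCoord d k) p = if k = j then c - d else 0 := by
  simp only [poissonBracket, ContinuousLinearMap.fderiv, linearCoord_apply, Pi.single_apply,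
    Pi.zero_apply, Complex.ofReal_zero, apply_ite Complex.ofReal, Complex.ofReal_one]
  by_cases hkj : k = j <;> simp [hkj, eq_comm (a := j)]

lemma osc_eq_linearCoord_mul {c : ℂ} (hc : c ^ 2 = -1) (j : Fin s) :
    osc j = fun p => linearCoord c j p * linearCoord (-c) j p := by
  ext p
  simp only [osc, linearCoord_apply, Complex.ofReal_add, Complex.ofReal_pow]
  linear_combination (p.2 j : ℂ) ^ 2 * hc

lemma isPoissonEigenfunction_osc_linearCoord {c : ℂ} (hc : c ^ 2 = -1) (j k : Fin s) :
    IsPoissonEigenfunction (osc j) (linearCoord c k) (if k = j then -2 * c else 0) where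
  differentiable := (linearCoord c k).differentiable
  poissonBracket_eq p := by
    rw [osc_eq_linearCoord_mul hc, poissonBracket_mul_left (linearCoord c j).differentiableAt
      (linearCoord (-c) j).differentiableAt, poissonBracket_linearCoord,
      poissonBracket_linearCoord]
    split_ifs with hkj
    · rw [hkj]
      ring
    · ring

lemma mono_eq_prod_linearCoord (α α' : Fin s → ℕ) :
    mono α α' = fun p => (∏ k, linearCoord Complex.I k p ^ α k) *
      ∏ k, linearCoord (-Complex.I) k p ^ α' k := by
  ext p
  simp only [mono, linearCoord_apply, neg_mul, sub_eq_add_neg]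

lemma isPoissonEigenfunction_osc_mono (j : Fin s) (α α' : Fin s → ℕ) :
    IsPoissonEigenfunction (osc j) (mono α α') (2 * Complex.I * (α' j - α j)) := by
  have hz (k : Fin s) := isPoissonEigenfunction_osc_linearCoord Complex.I_sq j k
  have hzbar (k : Fin s) :=
    isPoissonEigenfunction_osc_linearCoord (c := -Complex.I) (by simp) j k
  rw [mono_eq_prod_linearCoord]
  convert (IsPoissonEigenfunction.prod fun k _ => (hz k).pow (α k)).mul
    (.prod fun k _ => (hzbar k).pow (α' k)) using 1
  simp only [mul_ite, mul_zero, Finset.sum_ite_eq', Finset.mem_univ, if_true]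
  ring

lemma poissonBracket_osc_sum_mono (j : Fin s) (T : Finset ((Fin s → ℕ) × (Fin s → ℕ)))
    (k : (Fin s → ℕ) × (Fin s → ℕ) → ℂ) (p : PhaseSpace s) :
    poissonBracket (osc j) (fun q => ∑ a ∈ T, k a * mono a.1 a.2 q) p
      = ∑ a ∈ T, 2 * Complex.I * (a.2 j - a.1 j) * (k a * mono a.1 a.2 p) :=
  IsPoissonEigenfunction.poissonBracket_sum
    (fun a _ => (isPoissonEigenfunction_osc_mono j a.1 a.2).const_mul (k a)) p

lemma poissonBracket_sum_mono_osc_eq_zero (j : Fin s)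
    {T : Finset ((Fin s → ℕ) × (Fin s → ℕ))} (hT : ∀ a ∈ T, a.1 j = a.2 j)
    (k : (Fin s → ℕ) × (Fin s → ℕ) → ℂ) (p : PhaseSpace s) :
    poissonBracket (fun q => ∑ a ∈ T, k a * mono a.1 a.2 q) (osc j) p = 0 := by
  rw [poissonBracket_swap, poissonBracket_osc_sum_mono, neg_eq_zero]
  exact Finset.sum_eq_zero fun a ha => by simp [hT a ha]

end Oscillator

section SmallDivisor

variable {s : ℕ}

/-- The eigenvalue of `Σ_j b_j {|z_j|², ·}` on the monomial `m_{α,α'}`, by which the coefficients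
of the non-resonant monomials are divided. -/
def smallDivisor (b : Fin s → ℝ) (α α' : Fin s → ℕ) : ℂ :=
  2 * Complex.I * ∑ j, ((α' j - α j) * b j : ℝ)

lemma sum_mul_poissonBracket_osc_sum_mono (b : Fin s → ℝ)
    (T : Finset ((Fin s → ℕ) × (Fin s → ℕ))) (k : (Fin s → ℕ) × (Fin s → ℕ) → ℂ)
    (p : PhaseSpace s) :
    ∑ j, (b j : ℂ) * poissonBracket (osc j) (fun q => ∑ a ∈ T, k a * mono a.1 a.2 q) p
      = ∑ a ∈ T, smallDivisor b a.1 a.2 * (k a * mono a.1 a.2 p) := by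
  simp only [poissonBracket_osc_sum_mono, smallDivisor, Complex.ofReal_sum, Finset.mul_sum,
    Finset.sum_mul]
  rw [Finset.sum_comm]
  refine Finset.sum_congr rfl fun a _ => Finset.sum_congr rfl fun j _ => ?_
  push_cast
  ring

lemma sum_abs_sub_pos {α α' : Fin s → ℕ} (hne : α ≠ α') : 0 < ∑ j, |(α' j : ℤ) - α j| := by
  obtain ⟨j, hj⟩ := Function.ne_iff.mp hne
  exact Finset.sum_pos' (fun _ _ => abs_nonneg _) ⟨j, Finset.mem_univ j, abs_pos.mpr (by lia)⟩

lemma sum_abs_sub_le (α α' : Fin s → ℕ) :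
    ∑ j, |(α' j : ℤ) - α j| ≤ ((∑ j, α j + ∑ j, α' j : ℕ) : ℤ) := by
  push_cast
  rw [← Finset.sum_add_distrib]
  exact Finset.sum_le_sum fun j _ => abs_le.mpr ⟨by lia, by lia⟩

lemma smallDivisor_ne_zero {r : ℕ} {b : Fin s → ℝ}
    (hb : ∀ α : Fin s → ℤ, 0 < ∑ j, |α j| → ∑ j, |α j| < (r : ℤ) → ∑ j, (α j : ℝ) * b j ≠ 0)
    {α α' : Fin s → ℕ} (hne : α ≠ α') (hdeg : ∑ j, α j + ∑ j, α' j < r) :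
    smallDivisor b α α' ≠ 0 := by
  have hsum := hb (fun j => α' j - α j) (sum_abs_sub_pos hne)
    ((sum_abs_sub_le α α').trans_lt (mod_cast hdeg))
  push_cast at hsum
  exact mul_ne_zero (by simp) (mod_cast hsum)

variable {E : Type*} [NormedAddCommGroup E] [NormedSpace ℝ E] {n : WithTop ℕ∞} {U : Set E}

lemma contDiffOn_smallDivisor {β : Fin s → E → ℝ} (hβ : ∀ j, ContDiffOn ℝ n (β j) U)
    (α α' : Fin s → ℕ) : ContDiffOn ℝ n (fun u => smallDivisor (fun j => β j u) α α') U := by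
  have hsum : ContDiffOn ℝ n (fun u => ∑ j, ((α' j : ℝ) - α j) * β j u) U :=
    .sum fun j _ => contDiffOn_const.mul (hβ j)
  exact contDiffOn_const.mul (Complex.ofRealCLM.contDiff.comp_contDiffOn hsum)

end SmallDivisor

theorem birkhoff_cohomological_equation_general {s : ℕ} {E : Type*} [NormedAddCommGroup E]
    [NormedSpace ℝ E] {n : WithTop ℕ∞} (r : ℕ) (U : Set E) (β : Fin s → E → ℝ)
    (hβ : ∀ j, ContDiffOn ℝ n (β j) U)
    (hres : ∀ u ∈ U, ∀ α : Fin s → ℤ,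
      0 < ∑ j, |α j| → ∑ j, |α j| < (r : ℤ) → ∑ j, (α j : ℝ) * β j u ≠ 0)
    (S : Finset ((Fin s → ℕ) × (Fin s → ℕ)))
    (hS : ∀ a ∈ S, (∑ j, a.1 j) + (∑ j, a.2 j) < r)
    (c : (Fin s → ℕ) × (Fin s → ℕ) → E → ℂ) (hc : ∀ a ∈ S, ContDiffOn ℝ n (c a) U) :
    ∃ (T T' : Finset ((Fin s → ℕ) × (Fin s → ℕ))) (kc rc : (Fin s → ℕ) × (Fin s → ℕ) → E → ℂ),
      (∀ a ∈ T, (∑ j, a.1 j) + (∑ j, a.2 j) < r) ∧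
      (∀ a ∈ T', (∑ j, a.1 j) + (∑ j, a.2 j) < r) ∧
      (∀ a ∈ T, ContDiffOn ℝ n (kc a) U) ∧
      (∀ a ∈ T', ContDiffOn ℝ n (rc a) U) ∧
      (∀ u ∈ U, ∀ p : PhaseSpace s,
        (∑ a ∈ S, c a u * mono a.1 a.2 p)
          = (∑ a ∈ T, kc a u * mono a.1 a.2 p)
            + ∑ j : Fin s, (β j u : ℂ) *
                poissonBracket (osc j) (fun q => ∑ a ∈ T', rc a u * mono a.1 a.2 q) p) ∧
      (∀ u ∈ U, ∀ j : Fin s, ∀ p : PhaseSpace s,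
        poissonBracket (fun q => ∑ a ∈ T, kc a u * mono a.1 a.2 q) (osc j) p = 0) := by
  let D (a : (Fin s → ℕ) × (Fin s → ℕ)) (u : E) : ℂ := smallDivisor (fun j => β j u) a.1 a.2
  have hD : ∀ a ∈ S.filter (fun a => a.1 ≠ a.2), ∀ u ∈ U, D a u ≠ 0 := fun a ha u hu =>
    smallDivisor_ne_zero (hres u hu) (Finset.mem_filter.mp ha).2
      (hS a (Finset.mem_of_mem_filter a ha))
  refine ⟨S.filter (fun a => a.1 = a.2), S.filter (fun a => a.1 ≠ a.2), c,
    fun a u => c a u * (D a u)⁻¹, fun a ha => hS a (Finset.mem_of_mem_filter a ha),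
    fun a ha => hS a (Finset.mem_of_mem_filter a ha),
    fun a ha => hc a (Finset.mem_of_mem_filter a ha), fun a ha => ?_, fun u hu p => ?_,
    fun u _ j p => ?_⟩
  · exact (hc a (Finset.mem_of_mem_filter a ha)).mul
      ((contDiffOn_smallDivisor hβ a.1 a.2).inv (hD a ha))
  · rw [sum_mul_poissonBracket_osc_sum_mono,
      ← Finset.sum_filter_add_sum_filter_not S (fun a => a.1 = a.2)]
    congr 1
    refine Finset.sum_congr rfl fun a ha => ?_
    have hcancel : D a u * (c a u * (D a u)⁻¹) = c a u := by
      rw [mul_left_comm, mul_inv_cancel₀ (hD a ha u hu), mul_one]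
    exact (congrArg (· * mono a.1 a.2 p) hcancel.symm).trans (mul_assoc _ _ _)
  · exact poissonBracket_sum_mono_osc_eq_zero j
      (fun a ha => congrFun (Finset.mem_filter.mp ha).2 j) _ p

/-- The cohomological step of the Birkhoff normal form algorithm: under the
non-resonance condition on `β_1, …, β_s`, every finite sum
`R(u,x,ξ) = Σ c_{α,α'}(u) m_{α,α'}(x,ξ)` of monomials of degree `< r` with smooth
coefficients splits as `R = K + Σ_j β_j(u) {|z_j|², ρ(u,·)}`, where `K` and `ρ` have
the same form and `K(u,·)` Poisson-commutes with every oscillator `|z_j|²`. -/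
theorem birkhoff_cohomological_equation {s m : ℕ} (hs : 1 ≤ s) (r : ℕ)
    (U : Set (Fin m → ℝ)) (hU : IsOpen U)
    (β : Fin s → (Fin m → ℝ) → ℝ)
    (hβsm : ∀ j, ContDiffOn ℝ (⊤ : ℕ∞) (β j) U)
    (hres : ∀ u ∈ U, ∀ α : Fin s → ℤ,
      0 < ∑ j, |α j| → ∑ j, |α j| < (r : ℤ) → ∑ j, (α j : ℝ) * β j u ≠ 0)
    (S : Finset ((Fin s → ℕ) × (Fin s → ℕ)))
    (hS : ∀ a ∈ S, (∑ j, a.1 j) + (∑ j, a.2 j) < r)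
    (c : ((Fin s → ℕ) × (Fin s → ℕ)) → (Fin m → ℝ) → ℂ)
    (hc : ∀ a ∈ S, ContDiffOn ℝ (⊤ : ℕ∞) (c a) U) :
    ∃ (T T' : Finset ((Fin s → ℕ) × (Fin s → ℕ)))
      (kc rc : ((Fin s → ℕ) × (Fin s → ℕ)) → (Fin m → ℝ) → ℂ),
      (∀ a ∈ T, (∑ j, a.1 j) + (∑ j, a.2 j) < r) ∧
      (∀ a ∈ T', (∑ j, a.1 j) + (∑ j, a.2 j) < r) ∧
      (∀ a ∈ T, ContDiffOn ℝ (⊤ : ℕ∞) (kc a) U) ∧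
      (∀ a ∈ T', ContDiffOn ℝ (⊤ : ℕ∞) (rc a) U) ∧
      (∀ u ∈ U, ∀ p : (Fin s → ℝ) × (Fin s → ℝ),
        (∑ a ∈ S, c a u * mono a.1 a.2 p)
          = (∑ a ∈ T, kc a u * mono a.1 a.2 p)
            + ∑ j : Fin s, (β j u : ℂ) *
                poissonBracket (osc j) (fun q => ∑ a ∈ T', rc a u * mono a.1 a.2 q) p) ∧
      (∀ u ∈ U, ∀ j : Fin s, ∀ p : (Fin s → ℝ) × (Fin s → ℝ),
        poissonBracket (fun q => ∑ a ∈ T, kc a u * mono a.1 a.2 q) (osc j) p = 0) := by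
  exact birkhoff_cohomological_equation_general r U β hβsm hres S hS c hc
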